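/- Let p ∈ [1, ∞), let F : 𝕋 → ℂ be absolutely continuous with Ḟ ∈ L^p(𝕋), and let f = P[F] be its Poisson integral. Then for every r ∈ (0, 1), (1/(2π)) ∫₀^{2π} |f_z(re^{iθ})|^p dθ ≤ ‖Ḟ‖_{L^p(𝕋)}^p · ((1/(2π)) ∫₀^{2π} dt / |1 − r e^{−it}|)^p. -/

import Mathlib

open MeasureTheory Complex Metric Set Filter
open scoped Real Topology ENNReal

noncomputable section

/-- The Poisson kernel `P(z) = (1-|z|^2)/|1-z|^2`. -/
def poissonKer (z : ℂ) : ℝ := (1 - ‖z‖ ^ 2) / ‖1 - z‖ ^ 2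

/-- The Poisson integral of a boundary function `F` defined on the unit circle. -/
def poissonInt (F : ℂ → ℂ) (z : ℂ) : ℂ :=
  (1 / (2 * π)) * ∫ t in (0:ℝ)..(2 * π),
    (poissonKer (z * Complex.exp (-(t : ℂ) * Complex.I)) : ℂ) *
      F (Complex.exp ((t : ℂ) * Complex.I))

/-- The Poisson integral of a (2π-periodic) function of the angular variable. -/
def poissonIntR (φ : ℝ → ℂ) (z : ℂ) : ℂ :=
  (1 / (2 * π)) * ∫ t in (0:ℝ)..(2 * π),
    (poissonKer (z * Complex.exp (-(t : ℂ) * Complex.I)) : ℂ) * φ t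

/-- The conjugate Poisson kernel `P̃(z) = Im((1+z)/(1-z))`. -/
def conjPoissonKer (z : ℂ) : ℝ := ((1 + z) / (1 - z)).im

/-- The conjugate Poisson integral of a function of the angular variable. -/
def conjPoissonIntR (φ : ℝ → ℂ) (z : ℂ) : ℂ :=
  (1 / (2 * π)) * ∫ t in (0:ℝ)..(2 * π),
    (conjPoissonKer (z * Complex.exp (-(t : ℂ) * Complex.I)) : ℂ) * φ t

/-- Wirtinger derivative `f_z = (1/2)(∂ₓ - i ∂_y) f`. -/
def wdz (f : ℂ → ℂ) (z : ℂ) : ℂ :=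
  (1 / 2) * (fderiv ℝ f z 1 - Complex.I * fderiv ℝ f z Complex.I)

/-- Wirtinger derivative `f_z̄ = (1/2)(∂ₓ + i ∂_y) f`. -/
def wdzb (f : ℂ → ℂ) (z : ℂ) : ℂ :=
  (1 / 2) * (fderiv ℝ f z 1 + Complex.I * fderiv ℝ f z Complex.I)

/-- The angular derivative `f_θ(z) = i (z f_z(z) - z̄ f_z̄(z))`. -/
def fTheta (f : ℂ → ℂ) (z : ℂ) : ℂ :=
  Complex.I * (z * wdz f z - (starRingEnd ℂ) z * wdzb f z)

/-- The radial derivative multiplied by `r`: `r f_r(z) = z f_z(z) + z̄ f_z̄(z)`. -/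
def rFr (f : ℂ → ℂ) (z : ℂ) : ℂ :=
  z * wdz f z + (starRingEnd ℂ) z * wdzb f z

/-- `F : 𝕋 → ℂ` is absolutely continuous with angular derivative `Ḟ = Fd`,
i.e. `t ↦ F(e^{it})` is an indefinite integral of the (locally integrable,
2π-periodic) function `Fd`. -/
def IsACDeriv (F : ℂ → ℂ) (Fd : ℝ → ℂ) : Prop :=
  (∀ a b : ℝ, IntervalIntegrable Fd MeasureTheory.volume a b) ∧
  Function.Periodic Fd (2 * π) ∧
  ∀ t : ℝ, F (Complex.exp ((t : ℂ) * Complex.I)) = F 1 + ∫ s in (0:ℝ)..t, Fd s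

/-- membership in `L^p(𝕋)`, identifying `𝕋` with `[0, 2π)`. -/
def MemLpT (p : ℝ≥0∞) (φ : ℝ → ℂ) : Prop :=
  MeasureTheory.MemLp φ p (MeasureTheory.volume.restrict (Ioc (0:ℝ) (2 * π)))

/-- The integral mean `M_p(r, g)`. -/
def Mp (p : ℝ) (g : ℂ → ℂ) (r : ℝ) : ℝ :=
  ((1 / (2 * π)) * ∫ θ in (0:ℝ)..(2 * π),
      ‖g ((r : ℂ) * Complex.exp ((θ : ℂ) * Complex.I))‖ ^ p) ^ (1 / p)

/-- The `L^p(𝕋)` norm `((1/2π) ∫ |φ|^p)^{1/p}`. -/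
def lpNormT (p : ℝ) (φ : ℝ → ℂ) : ℝ :=
  ((1 / (2 * π)) * ∫ t in (0:ℝ)..(2 * π), ‖φ t‖ ^ p) ^ (1 / p)

/-- Membership in the analytic Hardy space `H^p(𝔻)` for `p ∈ [1, ∞)`. -/
def MemHp (p : ℝ) (g : ℂ → ℂ) : Prop :=
  DifferentiableOn ℂ g (ball (0:ℂ) 1) ∧ ∃ M : ℝ, ∀ r ∈ Ioo (0:ℝ) 1, Mp p g r ≤ M

/-- Membership in `H^∞(𝔻)`: bounded analytic functions on the unit disk. -/
def MemHinf (g : ℂ → ℂ) : Prop :=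
  DifferentiableOn ℂ g (ball (0:ℂ) 1) ∧ ∃ M : ℝ, ∀ z ∈ ball (0:ℂ) 1, ‖g z‖ ≤ M

/-- Harmonicity on the unit disk: `f` is C² with vanishing Laplacian. -/
def HarmonicOnD (f : ℂ → ℂ) : Prop :=
  ContDiffOn ℝ 2 f (ball (0:ℂ) 1) ∧
  ∀ z ∈ ball (0:ℂ) 1,
    fderiv ℝ (fun w => fderiv ℝ f w 1) z 1
      + fderiv ℝ (fun w => fderiv ℝ f w Complex.I) z Complex.I = 0

/-- Membership in the harmonic Hardy space `h^p(𝔻)` for `p ∈ [1, ∞)`. -/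
def Memhp (p : ℝ) (g : ℂ → ℂ) : Prop :=
  HarmonicOnD g ∧ ∃ M : ℝ, ∀ r ∈ Ioo (0:ℝ) 1, Mp p g r ≤ M

/-- Membership in `h^∞(𝔻)`: bounded harmonic functions on the unit disk. -/
def Memhinf (g : ℂ → ℂ) : Prop :=
  HarmonicOnD g ∧ ∃ M : ℝ, ∀ z ∈ ball (0:ℂ) 1, ‖g z‖ ≤ M

/-- `L` is the value of the principal-value Hilbert transform
`(1/2π) p.v. ∫ φ(t)/tan((θ-t)/2) dt` of (the 2π-periodic) `φ` at `θ`. -/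
def IsPVHilbert (φ : ℝ → ℂ) (θ : ℝ) (L : ℂ) : Prop :=
  Filter.Tendsto
    (fun ε : ℝ => (1 / (2 * π)) *
      ∫ t in Ioo (θ - π) (θ + π) \ Ioo (θ - ε) (θ + ε),
        φ t / (Real.tan ((θ - t) / 2) : ℂ))
    (nhdsWithin 0 (Ioi 0)) (nhds L)

/-!
Since `P(z) = 1/(1 - z) + conj (1/(1 - z)) - 1`, the function `f = P[F]` is the Cauchy integral of
`F`, plus the conjugate of the Cauchy integral of `conj F`, minus a constant. Only the first term
contributes to `f_z`, and integrating by parts on the circle moves one derivative onto `F`: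
`f_z(z) = (1/2πi) ∫ F(ζ) dζ / (ζ - z)² = (1/2πi) ∫ Ḟ(t) dt / (e^{it} - z)`.
At `z = re^{iθ}` we have `e^{it} - z = e^{iθ} (e^{-i(θ - t)} - r)`, so `e^{iθ} f_z(re^{iθ})` is a
convolution of `Ḟ` with a kernel of modulus `1/|1 - re^{-is}|`, and the bound is Young's inequality
for the convolution of `L¹` with `L^p` over a period.
-/

section Young

variable {α β : Type*} [MeasurableSpace α] [MeasurableSpace β] {μ : Measure α} {ν : Measure β}
  {p : ℝ}

theorem lintegral_mul_rpow_le_rpow_mul_lintegral {k u : β → ℝ≥0∞} (hk : AEMeasurable k ν)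
    (hu : AEMeasurable u ν) (hp : 1 ≤ p) :
    (∫⁻ y, k y * u y ∂ν) ^ p ≤ (∫⁻ y, k y ∂ν) ^ (p - 1) * ∫⁻ y, k y * u y ^ p ∂ν := by
  have hp0 : 0 < p := by linarith
  have hinv : p⁻¹ ≤ 1 := inv_le_one_of_one_le₀ hp
  -- Hölder's inequality with exponents `p` and `p / (p - 1)` applies to this factorization.
  have hsplit (y : β) : k y * u y = (k y * u y ^ p) ^ p⁻¹ * k y ^ (1 - p⁻¹) := by
    rw [ENNReal.mul_rpow_of_nonneg _ _ (by positivity), ENNReal.rpow_rpow_inv hp0.ne',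
      mul_right_comm, ← ENNReal.rpow_add_of_nonneg _ _ (by positivity) (by linarith),
      add_sub_cancel, ENNReal.rpow_one]
  calc (∫⁻ y, k y * u y ∂ν) ^ p
    _ = (∫⁻ y, (k y * u y ^ p) ^ p⁻¹ * k y ^ (1 - p⁻¹) ∂ν) ^ p := by simp_rw [← hsplit]
    _ ≤ ((∫⁻ y, k y * u y ^ p ∂ν) ^ p⁻¹ * (∫⁻ y, k y ∂ν) ^ (1 - p⁻¹)) ^ p := by
      gcongr
      exact ENNReal.lintegral_mul_norm_pow_le (hk.mul (hu.pow_const p)) hk (by positivity)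
        (by linarith) (add_sub_cancel _ _)
    _ = (∫⁻ y, k y ∂ν) ^ (p - 1) * ∫⁻ y, k y * u y ^ p ∂ν := by
      rw [ENNReal.mul_rpow_of_nonneg _ _ hp0.le, ENNReal.rpow_inv_rpow hp0.ne',
        ← ENNReal.rpow_mul, sub_mul, one_mul, inv_mul_cancel₀ hp0.ne', mul_comm]

theorem lintegral_rpow_lintegral_mul_le_of_lintegral_le [SFinite μ] [SFinite ν]
    {K : α → β → ℝ≥0∞} {u : β → ℝ≥0∞} {A B : ℝ≥0∞}
    (hK : AEMeasurable (Function.uncurry K) (μ.prod ν)) (hu : AEMeasurable u ν) (hp : 1 ≤ p)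
    (hA : ∀ x, ∫⁻ y, K x y ∂ν ≤ A) (hB : ∀ y, ∫⁻ x, K x y ∂μ ≤ B) :
    ∫⁻ x, (∫⁻ y, K x y * u y ∂ν) ^ p ∂μ ≤ A ^ (p - 1) * B * ∫⁻ y, u y ^ p ∂ν := by
  have hKu : AEMeasurable (fun q : α × β => K q.1 q.2 * u q.2 ^ p) (μ.prod ν) :=
    hK.mul (hu.comp_snd.pow_const p)
  calc ∫⁻ x, (∫⁻ y, K x y * u y ∂ν) ^ p ∂μ
    _ ≤ ∫⁻ x, A ^ (p - 1) * ∫⁻ y, K x y * u y ^ p ∂ν ∂μ := by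
      refine lintegral_mono_ae ?_
      filter_upwards [hK.aestronglyMeasurable.prodMk_left] with x hKx
      refine (lintegral_mul_rpow_le_rpow_mul_lintegral (k := K x) hKx.aemeasurable hu hp).trans ?_
      gcongr
      exact hA x
    _ = A ^ (p - 1) * ∫⁻ y, (∫⁻ x, K x y ∂μ) * u y ^ p ∂ν := by
      rw [lintegral_const_mul'' _ hKu.lintegral_prod_right', lintegral_lintegral_swap hKu]
      congr 1
      refine lintegral_congr_ae ?_
      filter_upwards [hK.aestronglyMeasurable.prod_swap.prodMk_left] with y hKy
      exact lintegral_mul_const'' _ hKy.aemeasurable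
    _ ≤ A ^ (p - 1) * ∫⁻ y, B * u y ^ p ∂ν := by
      gcongr with y
      exact hB y
    _ = A ^ (p - 1) * B * ∫⁻ y, u y ^ p ∂ν := by
      rw [lintegral_const_mul'' _ (hu.pow_const p), mul_assoc]

end Young

section Periodic

variable {T p : ℝ} {k u : ℝ → ℝ≥0∞}

theorem setLIntegral_Ioc_comp_sub_right_of_periodic (hT : 0 < T) (hk : Function.Periodic k T)
    (s : ℝ) : ∫⁻ t in Ioc 0 T, k (t - s) = ∫⁻ t in Ioc 0 T, k t := by
  have : Fact (0 < T) := ⟨hT⟩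
  have hlift := AddCircle.lintegral_preimage T 0
  simp only [zero_add] at hlift
  calc ∫⁻ t in Ioc 0 T, k (t - s) = ∫⁻ x : AddCircle T, hk.lift (x - s) := by
        rw [← hlift]; rfl
    _ = ∫⁻ t in Ioc 0 T, k t := by
        rw [lintegral_sub_right_eq_self, ← hlift]; rfl

theorem setLIntegral_Ioc_comp_sub_left_of_periodic (hT : 0 < T) (hk : Function.Periodic k T)
    (s : ℝ) : ∫⁻ t in Ioc 0 T, k (s - t) = ∫⁻ t in Ioc 0 T, k t := by
  have : Fact (0 < T) := ⟨hT⟩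
  have hlift := AddCircle.lintegral_preimage T 0
  simp only [zero_add] at hlift
  calc ∫⁻ t in Ioc 0 T, k (s - t) = ∫⁻ x : AddCircle T, hk.lift (s - x) := by
        rw [← hlift]; rfl
    _ = ∫⁻ t in Ioc 0 T, k t := by
        rw [lintegral_sub_left_eq_self, ← hlift]; rfl

theorem setLIntegral_Ioc_rpow_convolution_le_of_periodic (hT : 0 < T) (hk : Function.Periodic k T)
    (hkm : AEMeasurable k) (hu : AEMeasurable u (volume.restrict (Ioc 0 T))) (hp : 1 ≤ p) :
    ∫⁻ θ in Ioc 0 T, (∫⁻ t in Ioc 0 T, k (θ - t) * u t) ^ p ≤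
      (∫⁻ t in Ioc 0 T, k t) ^ p * ∫⁻ t in Ioc 0 T, u t ^ p := by
  have hkern : AEMeasurable (Function.uncurry fun θ t => k (θ - t))
      ((volume.restrict (Ioc 0 T)).prod (volume.restrict (Ioc 0 T))) :=
    (hkm.comp_quasiMeasurePreserving
      (quasiMeasurePreserving_sub_of_right_invariant volume volume)).mono_ac
        (Measure.restrict_le_self.absolutelyContinuous.prod
          Measure.restrict_le_self.absolutelyContinuous)
  refine (lintegral_rpow_lintegral_mul_le_of_lintegral_le hkern hu hp
    (fun θ => (setLIntegral_Ioc_comp_sub_left_of_periodic hT hk θ).le)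
    (fun t => (setLIntegral_Ioc_comp_sub_right_of_periodic hT hk t).le)).trans_eq ?_
  congr 1
  nth_rw 2 [← ENNReal.rpow_one (∫⁻ t in Ioc 0 T, k t)]
  rw [← ENNReal.rpow_add_of_nonneg _ _ (by linarith) zero_le_one, sub_add_cancel]

theorem integral_norm_rpow_convolution_le_of_periodic {𝕜 E : Type*} [NormedField 𝕜]
    [NormedAddCommGroup E] [NormedSpace ℝ E] [NormedSpace 𝕜 E] {k : ℝ → 𝕜} {φ : ℝ → E}
    (hT : 0 < T) (hk : Function.Periodic k T) (hki : IntervalIntegrable k volume 0 T) (hp : 1 ≤ p)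
    (hφ : MemLp φ (ENNReal.ofReal p) (volume.restrict (Ioc 0 T))) :
    ∫ θ in 0..T, ‖∫ t in 0..T, k (θ - t) • φ t‖ ^ p ≤
      (∫ t in 0..T, ‖k t‖) ^ p * ∫ t in 0..T, ‖φ t‖ ^ p := by
  have hp0 : 0 < p := by linarith
  have hkm : AEStronglyMeasurable k :=
    (aecover_Ioc tendsto_neg_atTop_atBot tendsto_id).aestronglyMeasurable
      fun n : ℝ => (hk.intervalIntegrable₀ hT.ne' hki (-n) n).aestronglyMeasurable
  have hkT : Integrable k (volume.restrict (Ioc 0 T)) :=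
    (intervalIntegrable_iff_integrableOn_Ioc_of_le hT.le).1 hki
  have hφp : Integrable (fun t => ‖φ t‖ ^ p) (volume.restrict (Ioc 0 T)) := by
    simpa only [ENNReal.toReal_ofReal hp0.le] using hφ.integrable_norm_rpow'
  simp only [intervalIntegral.integral_of_le hT.le]
  rw [← ENNReal.ofReal_le_ofReal_iff (by positivity)]
  calc ENNReal.ofReal (∫ θ in Ioc 0 T, ‖∫ t in Ioc 0 T, k (θ - t) • φ t‖ ^ p)
    _ ≤ ∫⁻ θ in Ioc 0 T, ‖∫ t in Ioc 0 T, k (θ - t) • φ t‖ₑ ^ p := by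
      rw [← Real.enorm_of_nonneg (by positivity)]
      refine (enorm_integral_le_lintegral_enorm _).trans_eq ?_
      simp [Real.enorm_rpow_of_nonneg, hp0.le]
    _ ≤ ∫⁻ θ in Ioc 0 T, (∫⁻ t in Ioc 0 T, ‖k (θ - t)‖ₑ * ‖φ t‖ₑ) ^ p := by
      gcongr with θ
      refine (enorm_integral_le_lintegral_enorm _).trans_eq ?_
      simp only [enorm_smul]
    _ ≤ (∫⁻ t in Ioc 0 T, ‖k t‖ₑ) ^ p * ∫⁻ t in Ioc 0 T, ‖φ t‖ₑ ^ p :=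
      setLIntegral_Ioc_rpow_convolution_le_of_periodic hT (hk.comp (‖·‖ₑ))
        hkm.enorm hφ.aestronglyMeasurable.enorm hp
    _ = ENNReal.ofReal ((∫ t in Ioc 0 T, ‖k t‖) ^ p * ∫ t in Ioc 0 T, ‖φ t‖ ^ p) := by
      rw [ENNReal.ofReal_mul (by positivity),
        ← ENNReal.ofReal_rpow_of_nonneg (by positivity) hp0.le,
        ofReal_integral_norm_eq_lintegral_enorm hkT,
        ofReal_integral_eq_lintegral_ofReal hφp (ae_of_all _ fun t => by positivity)]
      simp [← ENNReal.ofReal_rpow_of_nonneg, hp0.le]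

end Periodic

section AbsolutelyContinuous

variable {E : Type*} [NormedAddCommGroup E] {a b : ℝ}

theorem absolutelyContinuousOnInterval_of_dist_le {X Y : Type*} [PseudoMetricSpace X]
    [PseudoMetricSpace Y] {f : ℝ → X} {g : ℝ → Y} (hg : AbsolutelyContinuousOnInterval g a b)
    (hfg : ∀ x ∈ uIcc a b, ∀ y ∈ uIcc a b, dist (f x) (f y) ≤ dist (g x) (g y)) :
    AbsolutelyContinuousOnInterval f a b := by
  refine squeeze_zero' (.of_forall fun _ => Finset.sum_nonneg fun _ _ => dist_nonneg) ?_ hg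
  filter_upwards [mem_inf_of_right (mem_principal_self _)] with I hI
  exact Finset.sum_le_sum fun i hi => hfg _ (hI.1 i hi).1 _ (hI.1 i hi).2

variable [NormedSpace ℝ E] {f g : ℝ → E}

theorem absolutelyContinuousOnInterval_intervalIntegral (hg : IntervalIntegrable g volume a b)
    {c : ℝ} (hc : c ∈ uIcc a b) :
    AbsolutelyContinuousOnInterval (fun x => ∫ t in c..x, g t) a b := by
  refine absolutelyContinuousOnInterval_of_dist_le
    (hg.norm.absolutelyContinuousOnInterval_intervalIntegral hc) fun x hx y hy => ?_
  have hint {z : ℝ} (hz : z ∈ uIcc a b) : IntervalIntegrable g volume c z :=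
    hg.mono_set (uIcc_subset_uIcc hc hz)
  rw [dist_eq_norm, dist_eq_norm, Real.norm_eq_abs,
    intervalIntegral.integral_interval_sub_left (hint hx) (hint hy),
    intervalIntegral.integral_interval_sub_left (hint hx).norm (hint hy).norm]
  exact intervalIntegral.norm_integral_le_abs_integral_norm

variable [CompleteSpace E]

theorem integral_eq_sub_of_absolutelyContinuousOnInterval
    (hf : AbsolutelyContinuousOnInterval f a b)
    (hderiv : ∀ᵐ x, x ∈ uIcc a b → HasDerivAt f (g x) x) (hg : IntervalIntegrable g volume a b) :
    ∫ x in a..b, g x = f b - f a := by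
  have hprim := absolutelyContinuousOnInterval_intervalIntegral hg left_mem_uIcc
  obtain ⟨c, hc⟩ := (hf.sub hprim).const_of_ae_hasDerivAt_zero <| by
    filter_upwards [hderiv, hg.ae_hasDerivAt_integral] with x hfx hgx hx
    simpa only [sub_self] using (hfx hx).sub (hgx hx a left_mem_uIcc)
  have ha : f a = c := by simpa using hc _ left_mem_uIcc
  have hb : f b - ∫ t in a..b, g t = c := by simpa using hc _ right_mem_uIcc
  rw [ha, ← hb, sub_sub_cancel]

theorem integral_deriv_smul_add_smul_deriv_of_absolutelyContinuousOnInterval {𝕜 : Type*}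
    [NontriviallyNormedField 𝕜] [NormedAlgebra ℝ 𝕜] [NormedSpace 𝕜 E] [IsScalarTower ℝ 𝕜 E]
    {u u' : ℝ → 𝕜} {v v' : ℝ → E}
    (hu : AbsolutelyContinuousOnInterval u a b) (hv : AbsolutelyContinuousOnInterval v a b)
    (huderiv : ∀ᵐ x, x ∈ uIcc a b → HasDerivAt u (u' x) x)
    (hvderiv : ∀ᵐ x, x ∈ uIcc a b → HasDerivAt v (v' x) x)
    (hu' : IntervalIntegrable u' volume a b) (hv' : IntervalIntegrable v' volume a b) :
    (∫ x in a..b, u' x • v x) + ∫ x in a..b, u x • v' x = u b • v b - u a • v a := by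
  have hu'v : IntervalIntegrable (fun x => u' x • v x) volume a b :=
    hu'.smul_continuousOn hv.continuousOn
  have huv' : IntervalIntegrable (fun x => u x • v' x) volume a b :=
    hv'.continuousOn_smul hu.continuousOn
  rw [add_comm, ← intervalIntegral.integral_add huv' hu'v]
  refine integral_eq_sub_of_absolutelyContinuousOnInterval (hu.fun_smul hv) ?_ (huv'.add hu'v)
  filter_upwards [huderiv, hvderiv] with x hux hvx hx
  exact (hux hx).smul (hvx hx)

end AbsolutelyContinuous

section CauchyIntegral

variable {E : Type*} [NormedAddCommGroup E] [NormedSpace ℂ E] {f : ℂ → E} {c z : ℂ} {R : ℝ}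

theorem circleMap_sub_ne_zero_of_notMem_sphere (hz : z ∉ sphere c |R|) (θ : ℝ) :
    circleMap c R θ - z ≠ 0 :=
  sub_ne_zero.2 <| ne_of_mem_of_not_mem (circleMap_mem_sphere' c R θ) hz

theorem continuousOn_sub_inv_of_notMem {s : Set ℂ} (hz : z ∉ s) :
    ContinuousOn (fun ζ => (ζ - z)⁻¹) s :=
  (continuousOn_id.sub continuousOn_const).inv₀ fun _ hζ =>
    sub_ne_zero.2 (ne_of_mem_of_not_mem hζ hz)

theorem hasDerivAt_circleIntegral_sub_inv_smul (hf : CircleIntegrable f c R)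
    (hz : z ∉ sphere c |R|) :
    HasDerivAt (fun w => ∮ ζ in C(c, R), (ζ - w)⁻¹ • f ζ)
      (∮ ζ in C(c, R), (ζ - z)⁻¹ ^ 2 • f ζ) z := by
  obtain ⟨ε, hε, hball⟩ := Metric.isOpen_iff.1 isClosed_sphere.isOpen_compl z hz
  have hnotMem {w : ℂ} (hw : w ∈ ball z (ε / 2)) : w ∉ sphere c |R| :=
    hball (ball_subset_ball (by linarith) hw)
  have hdist {w : ℂ} (hw : w ∈ ball z (ε / 2)) (θ : ℝ) : ε / 2 ≤ ‖circleMap c R θ - w‖ := by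
    have hεz : ε ≤ dist (circleMap c R θ) z :=
      not_lt.1 fun h => hball h (circleMap_mem_sphere' c R θ)
    rw [← dist_eq_norm]
    linarith [dist_triangle (circleMap c R θ) w z, mem_ball.1 hw]
  have hint {u : ℂ → ℂ} (hu : ContinuousOn u (sphere c |R|)) := (hf.continuousOn_smul hu).out
  refine (intervalIntegral.hasDerivAt_integral_of_dominated_loc_of_deriv_le (𝕜 := ℂ)
    (F' := fun w θ => deriv (circleMap c R) θ • (circleMap c R θ - w)⁻¹ ^ 2 • f (circleMap c R θ))
    (bound := fun θ => |R| * ((ε / 2)⁻¹ ^ 2 * ‖f (circleMap c R θ)‖))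
    (ball_mem_nhds z (half_pos hε)) ?_ ?_ ?_ ?_ ?_ ?_).2
  · filter_upwards [ball_mem_nhds z (half_pos hε)] with w hwz
    exact (hint (continuousOn_sub_inv_of_notMem (hnotMem hwz))).aestronglyMeasurable_restrict_uIoc
  · exact hint (continuousOn_sub_inv_of_notMem hz)
  · exact (hint ((continuousOn_sub_inv_of_notMem hz).pow 2)).aestronglyMeasurable_restrict_uIoc
  · refine .of_forall fun θ _ w hwz => ?_
    rw [norm_smul, norm_smul, norm_pow, norm_inv, deriv_circleMap, norm_mul, norm_circleMap_zero,
      norm_I, mul_one]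
    gcongr
    exact hdist hwz θ
  · exact (hf.norm.const_mul _).const_mul _
  · refine .of_forall fun θ _ w hwz => ?_
    have hne := circleMap_sub_ne_zero_of_notMem_sphere (hnotMem hwz) θ
    have hinv := ((hasDerivAt_id w).const_sub (circleMap c R θ)).fun_inv hne
    simp only [id_eq, neg_neg, one_div, ← inv_pow] at hinv
    exact (hinv.smul_const _).const_smul _

theorem circleIntegral_sub_inv_sq_smul_of_absolutelyContinuousOnInterval [CompleteSpace E]
    {f' : ℝ → E} (hf : AbsolutelyContinuousOnInterval (fun θ => f (circleMap c R θ)) 0 (2 * π))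
    (hderiv : ∀ᵐ θ, θ ∈ uIcc 0 (2 * π) → HasDerivAt (fun θ => f (circleMap c R θ)) (f' θ) θ)
    (hf' : IntervalIntegrable f' volume 0 (2 * π)) (hz : z ∉ sphere c |R|) :
    ∮ ζ in C(c, R), (ζ - z)⁻¹ ^ 2 • f ζ =
      ∫ θ in 0..2 * π, (circleMap c R θ - z)⁻¹ • f' θ := by
  have hne := circleMap_sub_ne_zero_of_notMem_sphere hz
  have hu (θ : ℝ) : HasDerivAt (fun θ => (circleMap c R θ - z)⁻¹)
      (-(deriv (circleMap c R) θ * (circleMap c R θ - z)⁻¹ ^ 2)) θ := by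
    refine (((hasDerivAt_circleMap c R θ).sub_const z).fun_inv (hne θ)).congr_deriv ?_
    rw [deriv_circleMap, inv_pow, neg_div, div_eq_mul_inv]
  have huC : ContDiff ℝ 1 fun θ => (circleMap c R θ - z)⁻¹ :=
    ((contDiff_circleMap c R).sub contDiff_const).inv hne
  have hu' : Continuous fun θ => -(deriv (circleMap c R) θ * (circleMap c R θ - z)⁻¹ ^ 2) := by
    simp only [deriv_circleMap]
    have := huC.continuous
    fun_prop
  have hparts := integral_deriv_smul_add_smul_deriv_of_absolutelyContinuousOnInterval
    huC.contDiffOn.absolutelyContinuousOnInterval hf (.of_forall fun θ _ => hu θ) hderiv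
    (hu'.intervalIntegrable _ _) hf'
  have hper : circleMap c R (2 * π) = circleMap c R 0 := by
    simpa using periodic_circleMap c R 0
  rw [hper, sub_self, add_comm] at hparts
  simp only [neg_smul, intervalIntegral.integral_neg, mul_smul] at hparts
  exact (sub_eq_zero.1 (by rwa [sub_eq_add_neg])).symm

end CauchyIntegral

section PoissonIntegral

variable {F : ℂ → ℂ} {Fd : ℝ → ℂ} {z : ℂ}

/-- The Cauchy integral `(1/2πi) ∫_𝕋 F(ζ) dζ / (ζ - z)` of a function `F` on the unit circle; on
the unit disk it is the holomorphic part of the Poisson integral of `F`. -/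
def cauchyIntegral (F : ℂ → ℂ) (z : ℂ) : ℂ :=
  (2 * π * I)⁻¹ * ∮ ζ in C(0, 1), (ζ - z)⁻¹ • F ζ

theorem notMem_sphere_of_norm_lt_one (hz : ‖z‖ < 1) : z ∉ sphere (0 : ℂ) |1| := by
  rw [abs_one, mem_sphere_zero_iff_norm]
  exact hz.ne

theorem hasDerivAt_cauchyIntegral (hF : CircleIntegrable F 0 1) (hz : ‖z‖ < 1) :
    HasDerivAt (cauchyIntegral F) ((2 * π * I)⁻¹ * ∮ ζ in C(0, 1), (ζ - z)⁻¹ ^ 2 • F ζ) z :=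
  (hasDerivAt_circleIntegral_sub_inv_smul hF (notMem_sphere_of_norm_lt_one hz)).const_mul _

theorem cauchyIntegral_eq_intervalIntegral (F : ℂ → ℂ) (z : ℂ) :
    cauchyIntegral F z =
      1 / (2 * π) * ∫ t in 0..2 * π, (1 - z * exp (-t * I))⁻¹ * F (exp (t * I)) := by
  rw [cauchyIntegral, circleIntegral, ← intervalIntegral.integral_const_mul,
    ← intervalIntegral.integral_const_mul]
  refine intervalIntegral.integral_congr fun t _ => ?_
  have hkernel : (1 - z * exp (-t * I))⁻¹ = exp (t * I) * (exp (t * I) - z)⁻¹ := by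
    rw [neg_mul, exp_neg, ← div_eq_mul_inv, one_sub_div (exp_ne_zero _), inv_div, div_eq_mul_inv]
  simp only [deriv_circleMap, circleMap_zero, ofReal_one, one_mul, smul_eq_mul, hkernel]
  field_simp

theorem ofReal_poissonKer {w : ℂ} (hw : 1 - w ≠ 0) :
    (poissonKer w : ℂ) = (1 - w)⁻¹ + (starRingEnd ℂ) (1 - w)⁻¹ - 1 := by
  have hw' : (starRingEnd ℂ) (1 - w) ≠ 0 := (map_ne_zero _).2 hw
  rw [poissonKer]
  push_cast
  rw [← Complex.mul_conj', ← Complex.mul_conj', map_inv₀]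
  field_simp
  simp only [map_sub, map_one]
  ring

theorem one_sub_mul_exp_ne_zero (hz : ‖z‖ < 1) (t : ℝ) : 1 - z * exp (-t * I) ≠ 0 := by
  refine sub_ne_zero.2 fun h => hz.ne ?_
  simpa [← ofReal_neg, norm_exp_ofReal_mul_I] using (congrArg norm h).symm

theorem poissonInt_eq_cauchyIntegral (hF : CircleIntegrable F 0 1) (hz : ‖z‖ < 1) :
    poissonInt F z = cauchyIntegral F z +
      (starRingEnd ℂ) (cauchyIntegral (fun ζ => (starRingEnd ℂ) (F ζ)) z) -
        cauchyIntegral F 0 := by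
  have hFint : IntervalIntegrable (fun t : ℝ => F (exp (t * I))) volume 0 (2 * π) := by
    simpa only [CircleIntegrable, circleMap_zero, ofReal_one, one_mul] using hF
  have hkernel : Continuous fun t : ℝ => (1 - z * exp (-t * I))⁻¹ :=
    (by fun_prop : Continuous fun t : ℝ => 1 - z * exp (-t * I)).inv₀ (one_sub_mul_exp_ne_zero hz)
  have hconj : (starRingEnd ℂ) (cauchyIntegral (fun ζ => (starRingEnd ℂ) (F ζ)) z) =
      1 / (2 * π) * ∫ t in 0..2 * π,
        (starRingEnd ℂ) (1 - z * exp (-t * I))⁻¹ * F (exp (t * I)) := by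
    rw [cauchyIntegral_eq_intervalIntegral, map_mul, ← intervalIntegral.intervalIntegral_conj]
    simp only [map_mul, conj_conj, map_div₀, map_one, map_ofNat, conj_ofReal]
  have hcauchy := hFint.continuousOn_mul hkernel.continuousOn
  have hcauchy' : IntervalIntegrable
      (fun t : ℝ => (starRingEnd ℂ) (1 - z * exp (-t * I))⁻¹ * F (exp (t * I))) volume 0 (2 * π) :=
    hFint.continuousOn_mul (continuous_conj.comp hkernel).continuousOn
  rw [poissonInt, hconj, cauchyIntegral_eq_intervalIntegral, cauchyIntegral_eq_intervalIntegral,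
    ← mul_add, ← mul_sub]
  simp only [zero_mul, sub_zero, inv_one, one_mul]
  rw [← intervalIntegral.integral_add hcauchy hcauchy',
    ← intervalIntegral.integral_sub (hcauchy.add hcauchy') hFint]
  congr 2 with t
  rw [ofReal_poissonKer (one_sub_mul_exp_ne_zero hz t)]
  ring

theorem wdz_of_eventuallyEq_add_conj_sub {f A B : ℂ → ℂ} {a C : ℂ} (hA : HasDerivAt A a z)
    (hB : DifferentiableAt ℂ B z) (hf : f =ᶠ[𝓝 z] fun w => A w + (starRingEnd ℂ) (B w) - C) :
    wdz f z = a := by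
  have hA' : HasFDerivAt A _ z := hA.hasFDerivAt.restrictScalars ℝ
  have hB' : HasFDerivAt (fun w => (starRingEnd ℂ) (B w)) _ z :=
    (conjCLE : ℂ →L[ℝ] ℂ).hasFDerivAt.comp z (hB.hasDerivAt.hasFDerivAt.restrictScalars ℝ)
  rw [wdz, (((hA'.add hB').sub_const C).congr_of_eventuallyEq hf).fderiv]
  simp only [one_div, add_apply, ContinuousLinearMap.coe_restrictScalars',
    ContinuousLinearMap.toSpanSingleton_apply, smul_eq_mul, one_mul, ContinuousLinearMap.comp_apply,
    ContinuousLinearEquiv.coe_coe, ContinuousAlgEquiv.coeCLE_apply, conjCAE_apply, map_mul, conj_I,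
    neg_mul]
  linear_combination (-a / 2 + (starRingEnd ℂ) (deriv B z) / 2) * I_sq

theorem wdz_poissonInt (hF : CircleIntegrable F 0 1) (hz : ‖z‖ < 1) :
    wdz (poissonInt F) z = (2 * π * I)⁻¹ * ∮ ζ in C(0, 1), (ζ - z)⁻¹ ^ 2 • F ζ := by
  have hconj : CircleIntegrable (fun ζ => (starRingEnd ℂ) (F ζ)) 0 1 :=
    intervalIntegrable_iff.2 <|
      (conjCLE : ℂ →L[ℝ] ℂ).integrable_comp (intervalIntegrable_iff.1 hF)
  refine wdz_of_eventuallyEq_add_conj_sub (C := cauchyIntegral F 0)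
    (hasDerivAt_cauchyIntegral hF hz)
    (hasDerivAt_cauchyIntegral hconj hz).differentiableAt ?_
  filter_upwards [continuous_norm.continuousAt.eventually_lt continuousAt_const hz] with w hw
  exact poissonInt_eq_cauchyIntegral hF hw

namespace IsACDeriv

theorem apply_circleMap (hF : IsACDeriv F Fd) (t : ℝ) :
    F (circleMap 0 1 t) = F 1 + ∫ s in 0..t, Fd s := by
  rw [circleMap_zero, ofReal_one, one_mul, hF.2.2]

theorem absolutelyContinuousOnInterval (hF : IsACDeriv F Fd) :
    AbsolutelyContinuousOnInterval (fun t => F (circleMap 0 1 t)) 0 (2 * π) := by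
  simp only [hF.apply_circleMap]
  exact contDiffOn_const.absolutelyContinuousOnInterval.fun_add
    (absolutelyContinuousOnInterval_intervalIntegral (hF.1 _ _) left_mem_uIcc)

theorem ae_hasDerivAt (hF : IsACDeriv F Fd) : ∀ᵐ t, t ∈ uIcc 0 (2 * π) →
    HasDerivAt (fun t => F (circleMap 0 1 t)) (Fd t) t := by
  simp only [hF.apply_circleMap]
  filter_upwards [(hF.1 0 (2 * π)).ae_hasDerivAt_integral] with t ht htm
  exact (ht htm 0 left_mem_uIcc).const_add _

theorem wdz_poissonInt (hF : IsACDeriv F Fd) (hz : ‖z‖ < 1) :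
    wdz (poissonInt F) z = (2 * π * I)⁻¹ * ∫ t in 0..2 * π, (exp (t * I) - z)⁻¹ • Fd t := by
  have hFC := hF.absolutelyContinuousOnInterval
  rw [_root_.wdz_poissonInt hFC.continuousOn.intervalIntegrable hz,
    circleIntegral_sub_inv_sq_smul_of_absolutelyContinuousOnInterval hFC hF.ae_hasDerivAt
      (hF.1 _ _) (notMem_sphere_of_norm_lt_one hz)]
  simp only [circleMap_zero, ofReal_one, one_mul]

end IsACDeriv

/-- The kernel `k_r(s) = 1/(e^{-is} - r)`, whose convolution with `Ḟ` over a period is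
`2πi e^{iθ} f_z(re^{iθ})` for `f = P[F]`. -/
def wirtingerKernel (r s : ℝ) : ℂ := (exp (-s * I) - r)⁻¹

theorem wirtingerKernel_periodic (r : ℝ) : Function.Periodic (wirtingerKernel r) (2 * π) := by
  intro s
  rw [wirtingerKernel, wirtingerKernel]
  push_cast
  rw [neg_add, add_mul, neg_mul (2 * π : ℂ), exp_add, exp_neg (2 * π * I),
    exp_two_pi_mul_I, inv_one, mul_one]

theorem norm_wirtingerKernel (r s : ℝ) :
    ‖wirtingerKernel r s‖ = 1 / ‖1 - r * exp (-s * I)‖ := by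
  have hconj : (starRingEnd ℂ) (exp (-s * I) - r) = exp (s * I) * (1 - r * exp (-s * I)) := by
    rw [mul_sub, mul_one, mul_left_comm, ← exp_add, neg_mul, add_neg_cancel, exp_zero, mul_one,
      map_sub, ← exp_conj, conj_ofReal, map_neg, map_mul, conj_ofReal, conj_I, mul_neg, neg_neg]
  rw [wirtingerKernel, norm_inv, ← norm_conj, hconj, norm_mul, norm_exp_ofReal_mul_I, one_mul,
    one_div]

theorem continuous_wirtingerKernel {r : ℝ} (hr : |r| < 1) : Continuous (wirtingerKernel r) := by
  refine (by fun_prop : Continuous fun s : ℝ => exp (-s * I) - r).inv₀ fun s h => hr.ne ?_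
  rw [← Real.norm_eq_abs, ← norm_real, ← sub_eq_zero.1 h, ← ofReal_neg, norm_exp_ofReal_mul_I]

theorem IsACDeriv.exp_mul_wdz_poissonInt (hF : IsACDeriv F Fd) {r : ℝ} (hr : |r| < 1) (θ : ℝ) :
    exp (θ * I) * wdz (poissonInt F) (r * exp (θ * I)) =
      (2 * π * I)⁻¹ * ∫ t in 0..2 * π, wirtingerKernel r (θ - t) • Fd t := by
  have hz : ‖(r * exp (θ * I) : ℂ)‖ < 1 := by
    rwa [norm_mul, norm_exp_ofReal_mul_I, mul_one, norm_real]
  rw [hF.wdz_poissonInt hz, mul_left_comm, ← intervalIntegral.integral_const_mul]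
  congr 2 with t
  have hfactor : exp (t * I) - r * exp (θ * I) = exp (θ * I) * (exp (-(θ - t : ℝ) * I) - r) := by
    rw [mul_sub, ← exp_add]
    push_cast
    ring_nf
  rw [smul_eq_mul, hfactor, mul_inv, ← mul_assoc, mul_inv_cancel_left₀ (exp_ne_zero _)]
  rfl

theorem IsACDeriv.norm_wdz_poissonInt (hF : IsACDeriv F Fd) {r : ℝ} (hr : |r| < 1) (θ : ℝ) :
    ‖wdz (poissonInt F) (r * exp (θ * I))‖ =
      1 / (2 * π) * ‖∫ t in 0..2 * π, wirtingerKernel r (θ - t) • Fd t‖ := by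
  have h := congrArg norm (hF.exp_mul_wdz_poissonInt hr θ)
  rw [norm_mul, norm_mul, norm_exp_ofReal_mul_I, one_mul] at h
  rw [h]
  simp [abs_of_pos Real.pi_pos]

theorem lpNormT_rpow {p : ℝ} (hp : p ≠ 0) (φ : ℝ → ℂ) :
    lpNormT p φ ^ p = 1 / (2 * π) * ∫ t in 0..2 * π, ‖φ t‖ ^ p := by
  have hnonneg : 0 ≤ ∫ t in 0..2 * π, ‖φ t‖ ^ p :=
    intervalIntegral.integral_nonneg Real.two_pi_pos.le fun t _ => by positivity
  rw [lpNormT, one_div p, Real.rpow_inv_rpow (by positivity) hp]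

end PoissonIntegral

/-- For `p ∈ [1,∞)`, `F : 𝕋 → ℂ` absolutely continuous with
`Ḟ ∈ L^p(𝕋)` and `f = P[F]`, for every `r ∈ (0,1)`,
`(1/2π) ∫₀^{2π} |f_z(re^{iθ})|^p dθ ≤ ‖Ḟ‖_{L^p}^p ((1/2π) ∫₀^{2π} dt/|1 - r e^{-it}|)^p`. -/
theorem stmt12 (p : ℝ) (hp : 1 ≤ p) (F : ℂ → ℂ) (Fd : ℝ → ℂ)
    (hF : IsACDeriv F Fd) (hLp : MemLpT (ENNReal.ofReal p) Fd) :
    ∀ r ∈ Ioo (0:ℝ) 1,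
      (1 / (2 * π)) * ∫ θ in (0:ℝ)..(2 * π),
          ‖wdz (poissonInt F) ((r : ℂ) * Complex.exp ((θ : ℂ) * Complex.I))‖ ^ p
        ≤ lpNormT p Fd ^ p *
            ((1 / (2 * π)) * ∫ t in (0:ℝ)..(2 * π),
                1 / ‖1 - (r : ℂ) * Complex.exp (-(t : ℂ) * Complex.I)‖) ^ p := by
  intro r hr
  have hp0 : 0 < p := by linarith
  have hr1 : |r| < 1 := by rw [abs_of_pos hr.1]; exact hr.2
  have hyoung := integral_norm_rpow_convolution_le_of_periodic Real.two_pi_pos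
    (wirtingerKernel_periodic r) ((continuous_wirtingerKernel hr1).intervalIntegrable _ _) hp hLp
  have hmean : 0 ≤ ∫ t in 0..2 * π, ‖wirtingerKernel r t‖ :=
    intervalIntegral.integral_nonneg Real.two_pi_pos.le fun t _ => norm_nonneg _
  simp only [hF.norm_wdz_poissonInt hr1, ← norm_wirtingerKernel, lpNormT_rpow hp0.ne',
    Real.mul_rpow (by positivity : 0 ≤ 1 / (2 * π)) (norm_nonneg _),
    intervalIntegral.integral_const_mul]
  calc 1 / (2 * π) * ((1 / (2 * π)) ^ p *
        ∫ θ in 0..2 * π, ‖∫ t in 0..2 * π, wirtingerKernel r (θ - t) • Fd t‖ ^ p)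
    _ ≤ 1 / (2 * π) * ((1 / (2 * π)) ^ p *
        ((∫ t in 0..2 * π, ‖wirtingerKernel r t‖) ^ p * ∫ t in 0..2 * π, ‖Fd t‖ ^ p)) := by
      gcongr
    _ = 1 / (2 * π) * (∫ t in 0..2 * π, ‖Fd t‖ ^ p) *
        (1 / (2 * π) * ∫ t in 0..2 * π, ‖wirtingerKernel r t‖) ^ p := by
      rw [Real.mul_rpow (by positivity) hmean]
      ring

end
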